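/- Let f ∈ C_c^∞(ℝ²) with ‖∇f‖_{L¹(ℝ²;ℝ²)} = 1 and let ε > 0. Then there exist m ∈ ℕ and functions f_1, …, f_m ∈ W^{1,1}(ℝ²) such that: (a) for each i, the set {x ∈ ℝ² : ∇f_i(x) ≠ 0} has Lebesgue measure smaller than ε; (b) ∑_{i=1}^m ‖∇f_i‖_{L¹} ≤ 1; and (c) ‖∇f − ∑_{i=1}^m ∇f_i‖_{L¹} < ε. -/

import Mathlib

open MeasureTheory Set
open scoped RealInnerProductSpace

noncomputable section

/-- The divergence of a vector field `φ : ℝ² → ℝ²`. -/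
def divergence (φ : EuclideanSpace ℝ (Fin 2) → EuclideanSpace ℝ (Fin 2))
    (x : EuclideanSpace ℝ (Fin 2)) : ℝ :=
  ∑ i : Fin 2, fderiv ℝ φ x (EuclideanSpace.single i 1) i

/-- `gf` is a weak (distributional) gradient of `f`, with both `f` and `gf` integrable:
`∫ f div φ = - ∫ gf ⬝ φ` for all test functions `φ ∈ C_c¹(ℝ²; ℝ²)`. -/
def IsWeakGradPair (f : EuclideanSpace ℝ (Fin 2) → ℝ)
    (gf : EuclideanSpace ℝ (Fin 2) → EuclideanSpace ℝ (Fin 2)) : Prop :=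
  Integrable f ∧ Integrable gf ∧
  ∀ φ : EuclideanSpace ℝ (Fin 2) → EuclideanSpace ℝ (Fin 2),
    ContDiff ℝ 1 φ → HasCompactSupport φ →
      ∫ x, f x * divergence φ x = - ∫ x, ⟪gf x, φ x⟫

abbrev E2 := EuclideanSpace ℝ (Fin 2)

lemma weak_pair_of_lipschitz {F : E2 → ℝ} {G : E2 → E2} {C : NNReal}
    (hF : LipschitzWith C F) (hc : HasCompactSupport F) (hG : Integrable G)
    (hFG : ∀ᵐ x, HasGradientAt F (G x) x) : IsWeakGradPair F G := by
  refine ⟨hF.continuous.integrable_of_hasCompactSupport hc, hG, ?_⟩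
  intro φ hφ hφc
  have hcomp : ∀ i : Fin 2, ContDiff ℝ 1 (fun x => φ x i) := fun i => by fun_prop
  have hcs : ∀ i : Fin 2, HasCompactSupport (fun x => φ x i) := fun i =>
    hφc.comp_left (g := fun v : E2 => v i) (by simp)
  have hfd : ∀ i : Fin 2, ∀ x v, fderiv ℝ φ x v i = lineDeriv ℝ (fun x => φ x i) x v := by
    intro i x v
    have hd : DifferentiableAt ℝ φ x := hφ.differentiable (by simp) x
    have h1 : HasFDerivAt (fun x => φ x i)
        ((EuclideanSpace.proj i : E2 →L[ℝ] ℝ).comp (fderiv ℝ φ x)) x :=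
      (EuclideanSpace.proj i : E2 →L[ℝ] ℝ).hasFDerivAt.comp x hd.hasFDerivAt
    rw [h1.differentiableAt.lineDeriv_eq_fderiv, h1.fderiv]
    rfl
  have key : ∀ i : Fin 2, ∫ x, F x * fderiv ℝ φ x (EuclideanSpace.single i 1) i
      = - ∫ x, G x i * φ x i := by
    intro i
    obtain ⟨D, hD⟩ := ContDiff.lipschitzWith_of_hasCompactSupport (hcs i) (hcomp i) (by simp)
    have h := hF.integral_lineDeriv_mul_eq (μ := volume) hD (hcs i) (EuclideanSpace.single i 1)
    have h2 : ∫ x, lineDeriv ℝ F x (EuclideanSpace.single i 1) * φ x i = ∫ x, G x i * φ x i := by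
      apply integral_congr_ae
      filter_upwards [hFG] with x hx
      have hx' := hx.hasFDerivAt
      rw [hx.differentiableAt.lineDeriv_eq_fderiv, hx'.fderiv]
      simp [EuclideanSpace.inner_single_right]
    rw [← h2, h, ← integral_neg]
    congr 1
    ext x
    rw [← hfd i x, map_neg]
    simp [mul_comm]
  have hcont : ∀ i : Fin 2, Continuous
      (fun x => fderiv ℝ φ x (EuclideanSpace.single i 1) i) := by
    intro i
    have := hφ.continuous_fderiv (by simp)
    fun_prop
  have int1 : ∀ i : Fin 2, Integrable
      (fun x => F x * fderiv ℝ φ x (EuclideanSpace.single i 1) i) := by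
    intro i
    exact (hF.continuous.mul (hcont i)).integrable_of_hasCompactSupport hc.mul_right
  have int2 : ∀ i : Fin 2, Integrable (fun x => G x i * φ x i) := by
    intro i
    have hGi : Integrable (fun x => G x i) :=
      (EuclideanSpace.proj i : E2 →L[ℝ] ℝ).integrable_comp hG
    obtain ⟨B, hB⟩ := (hcs i).exists_bound_of_continuous (hcomp i).continuous
    exact hGi.mul_bdd (c := B) (hcomp i).continuous.aestronglyMeasurable
      (Filter.Eventually.of_forall hB)
  have e1 : ∫ x, F x * divergence φ x
      = ∑ i : Fin 2, ∫ x, F x * fderiv ℝ φ x (EuclideanSpace.single i 1) i := by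
    rw [← integral_finsetSum _ (fun i _ => int1 i)]
    simp only [divergence, Finset.mul_sum]
  have e2 : ∫ x, ⟪G x, φ x⟫ = ∑ i : Fin 2, ∫ x, G x i * φ x i := by
    rw [← integral_finsetSum _ (fun i _ => int2 i)]
    congr 1
    ext x
    simp [PiLp.inner_apply, mul_comm]
  rw [e1, e2, ← Finset.sum_neg_distrib]
  exact Finset.sum_congr rfl fun i _ => key i

/-- A level set carries no measure outside of the critical points. -/
lemma level_null {f : E2 → ℝ} {C : NNReal} (hL : LipschitzWith C f)
    (hd : Differentiable ℝ f) (t : ℝ) :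
    ∀ᵐ x, f x = t → gradient f x = 0 := by
  have hL' : LipschitzWith (1 * (C + 0)) (fun x => ‖f x - t‖) :=
    lipschitzWith_one_norm.comp (hL.sub (LipschitzWith.const t))
  filter_upwards [hL'.ae_differentiableAt (μ := volume)] with x hx hxt
  have hmin : IsLocalMin (fun x => ‖f x - t‖) x := by
    refine Filter.Eventually.of_forall fun y => ?_
    simp [hxt]
  have h0 := hmin.fderiv_eq_zero
  have h1 := hx.hasFDerivAt
  rw [h0, hasFDerivAt_iff_isLittleO] at h1
  have h2 : HasFDerivAt f (0 : E2 →L[ℝ] ℝ) x := by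
    rw [hasFDerivAt_iff_isLittleO]
    refine (Asymptotics.isBigO_of_le _ fun y => ?_).trans_isLittleO h1
    simp [hxt]
  simp [gradient, h2.fderiv]

lemma clamp_grad {f : E2 → ℝ} {C : NNReal} (hL : LipschitzWith C f)
    (hd : Differentiable ℝ f) {a b : ℝ} (hab : a ≤ b) (c : ℝ) :
    ∀ᵐ x, HasGradientAt (fun x => max a (min (f x) b) - c)
      ((Ioc a b).indicator (fun _ => gradient f x) (f x)) x := by
  have main : ∀ x, gradient f x = 0 → HasGradientAt (fun x => max a (min (f x) b) - c) 0 x := by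
    intro x hx
    have h := (hd x).hasGradientAt
    rw [hx, hasGradientAt_iff_isLittleO] at h
    rw [hasGradientAt_iff_isLittleO]
    refine (Asymptotics.isBigO_of_le _ fun y => ?_).trans_isLittleO h
    simp only [inner_zero_left, sub_zero, Real.norm_eq_abs]
    rw [sub_sub_sub_cancel_right]
    refine (abs_max_sub_max_le_max a _ a _).trans ?_
    simp only [sub_self, abs_zero]
    refine max_le (abs_nonneg _) ?_
    refine (abs_min_sub_min_le_max _ _ _ _).trans ?_
    simp
  filter_upwards [level_null hL hd a, level_null hL hd b] with x ha hb
  have hcf : ContinuousAt f x := (hd x).continuousAt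
  by_cases h0 : gradient f x = 0
  · rw [h0]
    simpa using main x h0
  have hxa : f x ≠ a := fun h => h0 (ha h)
  have hxb : f x ≠ b := fun h => h0 (hb h)
  rcases lt_or_gt_of_ne hxa with h | h
  · rw [indicator_of_notMem (by simp [not_lt.2 h.le])]
    refine (hasGradientAt_const x (a - c)).congr_of_eventuallyEq ?_
    filter_upwards [hcf.eventually_lt_const h] with y hy
    rw [max_eq_left ((min_le_left _ _).trans hy.le)]
  rcases lt_or_gt_of_ne hxb with h' | h'
  · rw [indicator_of_mem (by exact ⟨h, h'.le⟩)]
    have hg : HasGradientAt (fun x => f x - c) (gradient f x) x := by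
      have := (hd x).hasGradientAt.hasFDerivAt.sub_const c
      exact hasGradientAt_iff_hasFDerivAt.2 this
    refine hg.congr_of_eventuallyEq ?_
    filter_upwards [hcf.eventually_lt_const h', hcf.eventually_const_lt h] with y hy hy'
    rw [min_eq_left hy.le, max_eq_right hy'.le]
  · rw [indicator_of_notMem (by simp [h'])]
    refine (hasGradientAt_const x (b - c)).congr_of_eventuallyEq ?_
    filter_upwards [hcf.eventually_const_lt h'] with y hy
    rw [min_eq_right hy.le, max_eq_right hab]

lemma sum_cells {M : Type*} [AddCommMonoid M] (t : ℕ → ℝ) (ht : Monotone t) (n : ℕ) (y : ℝ)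
    (c : M) : ∑ i ∈ Finset.range n, (Ioc (t i) (t (i+1))).indicator (fun _ => c) y
      = (Ioc (t 0) (t n)).indicator (fun _ => c) y := by
  induction n with
  | zero => simp
  | succ n ih =>
    rw [Finset.sum_range_succ, ih, ← Ioc_union_Ioc_eq_Ioc (ht (Nat.zero_le n)) (ht n.le_succ),
      indicator_union_of_disjoint (Ioc_disjoint_Ioc_of_le le_rfl)]

/-- A finite atomless measure on the line has a fine grid on any compact interval. -/
lemma exists_grid (μ : Measure ℝ) [IsFiniteMeasure μ] (h0 : ∀ t, μ {t} = 0) (M : ℝ) (hM : 0 < M)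
    (e : ENNReal) (he : 0 < e) : ∃ (n : ℕ) (t : ℕ → ℝ), Monotone t ∧ t 0 = -M ∧ t n = M ∧
      ∀ i < n, μ (Ioc (t i) (t (i+1))) < e := by
  have hU : ∀ t : ℝ, ∃ U, {t} ⊆ U ∧ IsOpen U ∧ μ U < e := by
    intro t
    obtain ⟨U, h1, h2, h3⟩ := Set.exists_isOpen_lt_of_lt (μ := μ) {t} e (by rw [h0]; exact he)
    exact ⟨U, h1, h2, h3⟩
  choose U h1 h2 h3 using hU
  obtain ⟨δ, hδ, H⟩ := lebesgue_number_lemma_of_metric (isCompact_Icc (a := -M) (b := M)) h2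
    (fun x _ => mem_iUnion.2 ⟨x, h1 x rfl⟩)
  obtain ⟨n, hn⟩ := exists_nat_gt (2 * M / δ)
  have hn0 : (0 : ℝ) < n := lt_of_le_of_lt (by positivity) hn
  have hstep : 2 * M / n < δ := by
    rw [div_lt_iff₀ hδ] at hn
    rw [div_lt_iff₀ hn0]
    linarith
  have hpos : 0 < 2 * M / n := by positivity
  have hnM : (n : ℝ) * (2 * M / n) = 2 * M := by field_simp
  refine ⟨n, fun i => -M + i * (2 * M / n), ?_, by simp, by simp only [hnM]; ring, ?_⟩
  · intro i j hij
    have : (i : ℝ) ≤ j := by exact_mod_cast hij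
    simp only
    gcongr
  · intro i hi
    have hi' : (i : ℝ) ≤ n := by exact_mod_cast hi.le
    have hle : (i : ℝ) * (2 * M / n) ≤ 2 * M := by
      exact (mul_le_mul_of_nonneg_right hi' hpos.le).trans hnM.le
    have hge : 0 ≤ (i : ℝ) * (2 * M / n) := by positivity
    obtain ⟨s, hs⟩ := H (-M + i * (2 * M / n)) ⟨by linarith, by linarith⟩
    refine lt_of_le_of_lt (measure_mono (Subset.trans ?_ hs)) (h3 s)
    rintro y ⟨hy1, hy2⟩
    rw [Metric.mem_ball, Real.dist_eq, abs_lt]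
    push_cast at hy2
    constructor <;> nlinarith

/-- Let `f ∈ C_c^∞(ℝ²)` with `‖∇f‖_{L¹} = 1` and `ε > 0`. Then there are finitely many
functions `F 0, …, F (m-1) ∈ W^{1,1}(ℝ²)`, with weak gradients `G 0, …, G (m-1)`, such that
each `G i` is nonzero only on a set of measure `< ε`, `∑ i ‖G i‖_{L¹} ≤ 1`, and
`‖∇f - ∑ i G i‖_{L¹} < ε`. -/
theorem gradient_approx_by_small_support_sobolev
    (f : EuclideanSpace ℝ (Fin 2) → ℝ) (hf : ContDiff ℝ (⊤ : ℕ∞) f)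
    (hsupp : HasCompactSupport f)
    (hnorm : ∫ x, ‖gradient f x‖ = 1) (ε : ℝ) (hε : 0 < ε) :
    ∃ (m : ℕ) (F : Fin m → EuclideanSpace ℝ (Fin 2) → ℝ)
      (G : Fin m → EuclideanSpace ℝ (Fin 2) → EuclideanSpace ℝ (Fin 2)),
      (∀ i, IsWeakGradPair (F i) (G i)) ∧
      (∀ i, volume {x | G i x ≠ 0} < ENNReal.ofReal ε) ∧
      (∑ i, ∫ x, ‖G i x‖) ≤ 1 ∧
      (∫ x, ‖gradient f x - ∑ i, G i x‖) < ε := by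
  classical
  have hd : Differentiable ℝ f := hf.differentiable (by simp)
  obtain ⟨C, hL⟩ := ContDiff.lipschitzWith_of_hasCompactSupport hsupp hf (by simp)
  have hgc : Continuous (gradient f) := by
    have := hf.continuous_fderiv (by simp)
    exact (InnerProductSpace.toDual ℝ E2).symm.continuous.comp this
  have hgs : HasCompactSupport (gradient f) :=
    (hsupp.fderiv ℝ).comp_left (g := (InnerProductSpace.toDual ℝ E2).symm) (by simp)
  have hgi : Integrable (gradient f) := hgc.integrable_of_hasCompactSupport hgs
  obtain ⟨B, hB⟩ := hsupp.exists_bound_of_continuous hf.continuous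
  set S : Set E2 := {x | gradient f x ≠ 0} with hS
  have hSm : MeasurableSet S := (isOpen_ne_fun hgc continuous_const).measurableSet
  have hSf : volume S < ⊤ :=
    lt_of_le_of_lt (measure_mono (subset_tsupport _)) hgs.isCompact.measure_lt_top
  have : IsFiniteMeasure (volume.restrict S) := ⟨by simpa using hSf⟩
  have hfm : Measurable f := hf.continuous.measurable
  have hmap : ∀ A : Set ℝ, MeasurableSet A →
      (Measure.map f (volume.restrict S)) A = volume (f ⁻¹' A ∩ S) := by
    intro A hA
    rw [Measure.map_apply hfm hA, Measure.restrict_apply (hfm hA)]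
  have hatom : ∀ t, (Measure.map f (volume.restrict S)) {t} = 0 := by
    intro t
    rw [hmap _ (measurableSet_singleton t)]
    have := level_null hL hd t
    rw [ae_iff] at this
    refine measure_mono_null ?_ this
    rintro x ⟨hx1, hx2⟩ h
    exact hx2 (h hx1)
  have hMpos : 0 < |B| + 1 := by positivity
  obtain ⟨n, t, ht, ht0, htn, hcell⟩ := exists_grid _ hatom (|B| + 1) hMpos
    (ENNReal.ofReal ε) (by simpa using hε)
  have hrange : ∀ x, f x ∈ Ioc (t 0) (t n) := by
    intro x
    have h1 := hB x
    rw [Real.norm_eq_abs, abs_le] at h1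
    have h2 := le_abs_self B
    rw [ht0, htn]
    constructor <;> linarith [h1.1, h1.2]
  have hind : ∀ i, (fun x => (Ioc (t i) (t (i+1))).indicator (fun _ => gradient f x) (f x))
      = (f ⁻¹' Ioc (t i) (t (i+1))).indicator (gradient f) := by
    intro i
    ext1 x
    simp only [indicator, mem_preimage]
  have hGi : ∀ i, Integrable
      (fun x => (Ioc (t i) (t (i+1))).indicator (fun _ => gradient f x) (f x)) := by
    intro i
    rw [hind]
    exact hgi.indicator (hfm measurableSet_Ioc)
  refine ⟨n, fun i x => max (t i) (min (f x) (t (i+1))) - max (t i) (min 0 (t (i+1))),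
    fun i x => (Ioc (t i) (t (i+1))).indicator (fun _ => gradient f x) (f x), ?_, ?_, ?_, ?_⟩
  · intro i
    refine weak_pair_of_lipschitz (C := C) ?_ ?_ (hGi i)
      (clamp_grad hL hd (ht (Nat.le_succ i)) _)
    · have := ((hL.min_const (t (i+1))).const_max (t i)).sub
        (LipschitzWith.const (max (t i) (min 0 (t (i+1)))))
      simpa using this
    · exact hsupp.comp_left
        (g := fun y => max (t i) (min y (t (i+1))) - max (t i) (min 0 (t (i+1)))) (by simp)
  · intro i
    refine lt_of_le_of_lt (measure_mono ?_) ((hmap _ measurableSet_Ioc).symm ▸ hcell i i.2)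
    intro x hx
    simp only [ne_eq, mem_ofPred_eq, indicator_apply_eq_zero, not_forall] at hx
    obtain ⟨h1, h2⟩ := hx
    exact ⟨h1, h2⟩
  · rw [← integral_finsetSum _ (fun (i : Fin n) _ => (hGi i).norm), ← hnorm]
    refine le_of_eq (integral_congr_ae (Filter.Eventually.of_forall fun x => ?_))
    simp only [norm_indicator_eq_indicator_norm]
    rw [Fin.sum_univ_eq_sum_range
      (fun i => (Ioc (t i) (t (i+1))).indicator (fun _ => ‖gradient f x‖) (f x)),
      sum_cells t ht, indicator_of_mem (hrange x)]
  · have : ∀ x, gradient f x - ∑ i : Fin n,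
        (Ioc (t i) (t (i+1))).indicator (fun _ => gradient f x) (f x) = 0 := by
      intro x
      rw [Fin.sum_univ_eq_sum_range
        (fun i => (Ioc (t i) (t (i+1))).indicator (fun _ => gradient f x) (f x)),
        sum_cells t ht, indicator_of_mem (hrange x), sub_self]
    simpa [this] using hε

end
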